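/- Let β ∈ (1,2) be a multinacci number. Then E_β = [0, 1 − 1/β) \ ⋃ [t_L, t_R), where the union is taken over all β-Lyndon intervals [t_L, t_R). -/

import Mathlib

open Set Filter MeasureTheory

/-- The β-transformation `x ↦ βx (mod 1)`. -/
noncomputable def Tbeta (β x : ℝ) : ℝ := Int.fract (β * x)

/-- The survivor set `K_β(t) = {x ∈ [0,1) : T_β^n x ≥ t for all n ≥ 0}`. -/
def Kset (β t : ℝ) : Set ℝ := {x | x ∈ Set.Ico (0 : ℝ) 1 ∧ ∀ n : ℕ, t ≤ (Tbeta β)^[n] x}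

/-- Strict lexicographic order on sequences of naturals. -/
def seqLt (x y : ℕ → ℕ) : Prop := ∃ n, (∀ i, i < n → x i = y i) ∧ x n < y n

/-- Lexicographic order on sequences of naturals. -/
def seqLe (x y : ℕ → ℕ) : Prop := x = y ∨ seqLt x y

/-- The `n`-th iterate of the left shift. -/
def shiftN (n : ℕ) (x : ℕ → ℕ) : ℕ → ℕ := fun i => x (i + n)

/-- The sequence `w 0^∞`. -/
def wordSeq (w : List ℕ) : ℕ → ℕ := fun i => w.getD i 0

/-- The periodic sequence `w^∞`. -/
def perSeq (w : List ℕ) : ℕ → ℕ := fun i => w.getD (i % w.length) 0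

/-- The sequence obtained by concatenating the word `w` with the sequence `x`. -/
def catSeq (w : List ℕ) (x : ℕ → ℕ) : ℕ → ℕ :=
  fun i => if i < w.length then w.getD i 0 else x (i - w.length)

/-- The greedy β-expansion of `t`: the digit `b_{i+1}` is `⌊β T_β^i t⌋`. -/
noncomputable def greedy (β t : ℝ) : ℕ → ℕ := fun i => (⌊β * (Tbeta β)^[i] t⌋).toNat

/-- `d` is the quasi-greedy β-expansion of `1`: the lexicographically largest
sequence in `{0,1}^ℕ` not ending in `0^∞` whose digits sum to `1` in base `β`. -/
def IsQuasiGreedy (β : ℝ) (d : ℕ → ℕ) : Prop :=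
  (∀ i, d i ≤ 1) ∧ (¬ ∃ N, ∀ n, N ≤ n → d n = 0) ∧
  (∑' i : ℕ, (d i : ℝ) / β ^ (i + 1) = 1) ∧
  ∀ e : ℕ → ℕ, (∀ i, e i ≤ 1) → (¬ ∃ N, ∀ n, N ≤ n → e n = 0) →
    (∑' i : ℕ, (e i : ℝ) / β ^ (i + 1) = 1) → seqLe e d

/-- `s = s_1…s_p` is a β-Lyndon word: `s_{i+1}…s_p ≻ s_1…s_{p-i}` for `1 ≤ i < p`
and `σ^n(s^∞) ≺ δ(β)` for all `n ≥ 0`. -/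
def IsBetaLyndon (β : ℝ) (s : List ℕ) : Prop :=
  s ≠ [] ∧ (∀ a ∈ s, a ≤ 1) ∧
  (∀ i, 1 ≤ i → i < s.length →
    seqLt (wordSeq (s.take (s.length - i))) (wordSeq (s.drop i))) ∧
  (∀ d : ℕ → ℕ, IsQuasiGreedy β d → ∀ n : ℕ, seqLt (shiftN n (perSeq s)) d)

/-- Left endpoint `t_L = Σ_{i=1}^p s_i β^{-i}` of the β-Lyndon interval generated by `s`. -/
noncomputable def lyndonLeft (β : ℝ) (s : List ℕ) : ℝ :=
  ∑ i ∈ Finset.range s.length, (s.getD i 0 : ℝ) / β ^ (i + 1)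

/-- Right endpoint `t_R = (β^p/(β^p - 1)) t_L` of the β-Lyndon interval generated by `s`. -/
noncomputable def lyndonRight (β : ℝ) (s : List ℕ) : ℝ :=
  β ^ s.length / (β ^ s.length - 1) * lyndonLeft β s

/-- The union of all β-Lyndon intervals `[t_L, t_R)`. -/
noncomputable def lyndonUnionIco (β : ℝ) : Set ℝ :=
  ⋃ s ∈ {s : List ℕ | IsBetaLyndon β s}, Set.Ico (lyndonLeft β s) (lyndonRight β s)

/-- The symbolic survivor set `K̃_β(t)` with upper bound sequence `d = δ(β)`. -/
def Ktilde (β t : ℝ) (d : ℕ → ℕ) : Set (ℕ → ℕ) :=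
  {x | (∀ i, x i ≤ 1) ∧ ∀ n : ℕ, seqLe (greedy β t) (shiftN n x) ∧ seqLe (shiftN n x) d}

/-- The set-valued bifurcation set `E_β`. -/
def Eset (β : ℝ) : Set ℝ :=
  {t | t ∈ Set.Ico (0 : ℝ) 1 ∧ ∀ t', t < t' → t' < 1 → Kset β t' ≠ Kset β t}

/-- The dimension bifurcation set `B_β`. -/
def Bset (β : ℝ) : Set ℝ :=
  {t | t ∈ Set.Ico (0 : ℝ) 1 ∧ ∀ t', t < t' → t' < 1 → dimH (Kset β t') ≠ dimH (Kset β t)}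

/-- `β` is a multinacci number: `β^{m+1} = β^m + ⋯ + β + 1` for some `m ≥ 1`. -/
def IsMultinacci (β : ℝ) : Prop :=
  ∃ m : ℕ, 1 ≤ m ∧ β ^ (m + 1) = ∑ i ∈ Finset.range (m + 1), β ^ i


/-! ### values of digit sequences -/

noncomputable def pS (β : ℝ) (x : ℕ → ℕ) (n : ℕ) : ℝ :=
  ∑ i ∈ Finset.range n, (x i : ℝ) / β ^ (i + 1)

noncomputable def sval (β : ℝ) (x : ℕ → ℕ) : ℝ := ∑' i : ℕ, (x i : ℝ) / β ^ (i + 1)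

def del (m : ℕ) : ℕ → ℕ := fun i => if i % (m + 1) = m then 0 else 1

lemma del_le (m i : ℕ) : del m i ≤ 1 := by unfold del; split_ifs <;> simp

lemma pS_succ (β : ℝ) (x : ℕ → ℕ) (n : ℕ) :
    pS β x (n + 1) = pS β x n + (x n : ℝ) / β ^ (n + 1) := by
  simp [pS, Finset.sum_range_succ]

lemma pS_congr (β : ℝ) (x y : ℕ → ℕ) (n : ℕ) (h : ∀ i, i < n → x i = y i) :
    pS β x n = pS β y n := by
  apply Finset.sum_congr rfl
  intro i hi
  rw [h i (Finset.mem_range.1 hi)]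

lemma pS_mono {β : ℝ} (hβ : 1 < β) (x : ℕ → ℕ) : Monotone (pS β x) := by
  apply monotone_nat_of_le_succ
  intro n
  rw [pS_succ]
  have : 0 ≤ (x n : ℝ) / β ^ (n + 1) := by positivity
  linarith

lemma sval_summable {β : ℝ} (hβ : 1 < β) (x : ℕ → ℕ) (hx : ∀ i, x i ≤ 1) :
    Summable (fun i : ℕ => (x i : ℝ) / β ^ (i + 1)) := by
  have h0 : 0 < β := by linarith
  have hg : Summable (fun i : ℕ => (1 / β) ^ i) :=
    summable_geometric_of_lt_one (by positivity) (by rw [div_lt_one h0]; exact hβ)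
  have hg' := (summable_nat_add_iff 1).2 hg
  refine Summable.of_nonneg_of_le (fun i => by positivity) (fun i => ?_) hg'
  rw [one_div_pow]
  have : (x i : ℝ) ≤ 1 := by exact_mod_cast hx i
  gcongr

lemma sval_nonneg {β : ℝ} (hβ : 1 < β) (x : ℕ → ℕ) : 0 ≤ sval β x :=
  tsum_nonneg (fun i => by positivity)

lemma sval_split {β : ℝ} (hβ : 1 < β) (x : ℕ → ℕ) (hx : ∀ i, x i ≤ 1) (k : ℕ) :
    sval β x = pS β x k + sval β (shiftN k x) / β ^ k := by
  have h0 : 0 < β := by linarith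
  have := (sval_summable hβ x hx).sum_add_tsum_nat_add k
  unfold sval pS
  rw [← this, ← tsum_div_const]
  congr 1
  apply tsum_congr
  intro i
  simp only [shiftN]
  rw [div_div, ← pow_add]
  congr 2
  ring

lemma sval_le_ones {β : ℝ} (hβ : 1 < β) (x : ℕ → ℕ) (hx : ∀ i, x i ≤ 1) :
    sval β x ≤ sval β (fun _ => 1) := by
  refine Summable.tsum_le_tsum (fun i => ?_) (sval_summable hβ x hx)
    (sval_summable hβ _ (fun _ => le_rfl))
  have : (x i : ℝ) ≤ ((1 : ℕ) : ℝ) := by exact_mod_cast hx i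
  gcongr

lemma sval_pos {β : ℝ} (hβ : 1 < β) (x : ℕ → ℕ) (hx : ∀ i, x i ≤ 1) (j : ℕ) (hj : x j ≠ 0) :
    0 < sval β x := by
  have h1 : 0 < (x j : ℝ) := by exact_mod_cast Nat.pos_of_ne_zero hj
  exact (sval_summable hβ x hx).tsum_pos (fun i => by positivity) j (by positivity)

/-! ### multinacci -/

lemma sum_inv {β : ℝ} (hβ : 1 < β) (n : ℕ) :
    ∑ i ∈ Finset.range n, 1 / β ^ (i + 1) = (1 - 1 / β ^ n) / (β - 1) := by
  have h0 : 0 < β := by linarith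
  have h1 : β - 1 ≠ 0 := by linarith
  induction n with
  | zero => simp
  | succ n ih =>
    rw [Finset.sum_range_succ, ih]
    field_simp
    ring

lemma mult_eq {β : ℝ} (hβ : 1 < β) (m : ℕ) 
    (h : β ^ (m + 1) = ∑ i ∈ Finset.range (m + 1), β ^ i) :
    1 / β ^ (m + 1) = 2 - β := by
  have h0 : 0 < β := by linarith
  have h1 := geom_sum_mul β (m + 1)
  rw [← h] at h1
  have : 0 < β ^ (m + 1) := by positivity
  field_simp
  linarith

lemma shift_del (m k : ℕ) (hk : k % (m + 1) = 0) : shiftN k (del m) = del m := by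
  funext i
  simp only [shiftN, del]
  rw [Nat.add_mod, hk, Nat.add_zero, Nat.mod_mod]

lemma sval_del {β : ℝ} (hβ : 1 < β) (m : ℕ) (hm : 1 / β ^ (m + 1) = 2 - β) :
    sval β (del m) = 1 := by
  have h0 : 0 < β := by linarith
  have h := sval_split hβ (del m) (del_le m) (m + 1)
  rw [shift_del m (m + 1) (by simp), pS_succ] at h
  have e1 : pS β (del m) m = (1 - 1 / β ^ m) / (β - 1) := by
    rw [← sum_inv hβ]
    apply Finset.sum_congr rfl
    intro i hi
    have := Finset.mem_range.1 hi
    simp only [del]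
    rw [if_neg]
    · simp
    · rw [Nat.mod_eq_of_lt (by omega)]; omega
  have e2 : del m m = 0 := by simp [del]
  have e3 : 1 / β ^ m = β * (2 - β) := by
    rw [← hm, pow_succ]; field_simp
  rw [e1, e2, e3, div_eq_mul_one_div (sval β (del m)), hm] at h
  have h1 : β - 1 ≠ 0 := by linarith
  have e4 : (1 - β * (2 - β)) / (β - 1) = β - 1 := by field_simp; ring
  rw [e4] at h
  simp only [Nat.cast_zero, zero_div, add_zero] at h
  have : (β - 1) * (sval β (del m) - 1) = 0 := by linarith
  rcases mul_eq_zero.1 this with h | h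
  · exact absurd h h1
  · linarith

lemma seq_tri (x y : ℕ → ℕ) : x = y ∨ seqLt x y ∨ seqLt y x := by
  by_cases h : x = y
  · exact Or.inl h
  right
  have h' : ∃ n, x n ≠ y n := by
    by_contra hh
    push Not at hh
    exact h (funext hh)
  classical
  have h1 := Nat.find_spec h'
  have h2 : ∀ i, i < Nat.find h' → x i = y i := fun i hi => by
    have := Nat.find_min h' hi
    tauto
  rcases lt_or_gt_of_ne h1 with h3 | h3
  · exact Or.inl ⟨_, h2, h3⟩
  · exact Or.inr ⟨_, fun i hi => (h2 i hi).symm, h3⟩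

lemma seqLt_trans {x y z : ℕ → ℕ} (h : seqLt x y) (h' : seqLt y z) : seqLt x z := by
  obtain ⟨a, ha, ha'⟩ := h
  obtain ⟨b, hb, hb'⟩ := h'
  rcases lt_trichotomy a b with h | h | h
  · exact ⟨a, fun i hi => (ha i hi).trans (hb i (by omega)), by rw [← hb a h]; exact ha'⟩
  · subst h
    exact ⟨a, fun i hi => (ha i hi).trans (hb i hi), ha'.trans hb'⟩
  · exact ⟨b, fun i hi => (ha i (by omega)).trans (hb i hi), by rw [ha b h]; exact hb'⟩

lemma del_zero {m q : ℕ} (h : del m q = 0) : q % (m + 1) = m := by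
  unfold del at h; split_ifs at h; assumption

lemma del_qg {β : ℝ} (hβ : 1 < β) (m : ℕ) (hm : 1 / β ^ (m + 1) = 2 - β) (hm1 : 1 ≤ m) :
    IsQuasiGreedy β (del m) := by
  have h0 : 0 < β := by linarith
  refine ⟨del_le m, ?_, sval_del hβ m hm, ?_⟩
  · rintro ⟨N, hN⟩
    have := hN (N * (m + 1)) (by nlinarith)
    have := del_zero this
    simp at this
    omega
  · intro e he hne hs
    change sval β e = 1 at hs
    rcases seq_tri e (del m) with h | h | h
    · exact Or.inl h
    · exact Or.inr h
    exfalso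
    obtain ⟨q, hq, hq'⟩ := h
    have heq : e q = 1 := by have := he q; omega
    have hdq : del m q = 0 := by have := he q; omega
    have hmod := del_zero hdq
    have s1 := sval_split hβ (del m) (del_le m) (q + 1)
    have s2 := sval_split hβ e he (q + 1)
    have hmod' : (q + 1) % (m + 1) = 0 := by
      rw [Nat.add_mod, hmod, Nat.mod_eq_of_lt (show 1 < m + 1 by omega)]; simp
    rw [shift_del m _ hmod', pS_succ, hdq, sval_del hβ m hm] at s1
    rw [pS_succ, heq, hs, pS_congr β e (del m) q (fun i hi => (hq i hi).symm)] at s2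
    push Not at hne
    obtain ⟨n, hn, hn'⟩ := hne (q + 1)
    have hp : 0 < sval β (shiftN (q + 1) e) := by
      apply sval_pos hβ _ (fun i => he _) (n - (q + 1))
      simpa [shiftN, Nat.sub_add_cancel hn] using hn'
    have hp' : 0 < sval β (shiftN (q + 1) e) / β ^ (q + 1) := by positivity
    simp at s1 s2
    linarith

/-- Parry-type bound. -/
lemma sval_le_one {β : ℝ} (hβ : 1 < β) (m : ℕ) (hm : 1 / β ^ (m + 1) = 2 - β)
    (x : ℕ → ℕ) (hx : ∀ i, x i ≤ 1) (h : ∀ n, seqLt (shiftN n x) (del m)) (n : ℕ) :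
    sval β (shiftN n x) ≤ 1 := by
  have h0 : 0 < β := by linarith
  set C := sval β (fun _ => 1) with hC
  have hC0 : 0 ≤ C := sval_nonneg hβ _
  have key : ∀ N n, sval β (shiftN n x) ≤ 1 + C / β ^ N := by
    intro N
    induction N with
    | zero =>
      intro n
      have := sval_le_ones hβ (shiftN n x) (fun i => hx _)
      simp
      linarith
    | succ N ih =>
      intro n
      obtain ⟨q, hq, hq'⟩ := h n
      have hdq : del m q = 1 := by have := del_le m q; omega
      have hyq : shiftN n x q = 0 := by omega
      have s1 := sval_split hβ (shiftN n x) (fun i => hx _) (q + 1)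
      have s2 := sval_split hβ (del m) (del_le m) (q + 1)
      have s3 : 0 ≤ sval β (shiftN (q + 1) (del m)) / β ^ (q + 1) :=
        div_nonneg (sval_nonneg hβ _) (by positivity)
      rw [pS_succ, hdq, sval_del hβ m hm] at s2
      rw [pS_succ, hyq, pS_congr β _ (del m) q hq] at s1
      have e : shiftN (q + 1) (shiftN n x) = shiftN (q + 1 + n) x := by
        funext i; simp only [shiftN]; congr 1; ring
      have s4 := ih (q + 1 + n)
      rw [e] at s1
      have s5 : sval β (shiftN (q + 1 + n) x) / β ^ (q + 1) ≤ (1 + C / β ^ N) / β ^ (q + 1) := by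
        gcongr
      have s6 : (C / β ^ N) / β ^ (q + 1) ≤ C / β ^ (N + 1) := by
        rw [div_div, ← pow_add]
        apply div_le_div_of_nonneg_left hC0 (by positivity)
        exact pow_le_pow_right₀ hβ.le (by omega)
      rw [add_div] at s5
      simp only [Nat.cast_one, Nat.cast_zero, zero_div] at s1 s2
      linarith
  have hlim : Tendsto (fun N : ℕ => 1 + C / β ^ N) atTop (nhds (1 + 0)) := by
    apply Tendsto.const_add
    exact Tendsto.const_div_atTop (tendsto_pow_atTop_atTop_of_one_lt hβ) _
  rw [add_zero] at hlim
  exact ge_of_tendsto' hlim (fun N => key N n)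

/-! ### dynamics -/

lemma T_mem {β t : ℝ} (ht : t ∈ Set.Ico (0 : ℝ) 1) (n : ℕ) :
    (Tbeta β)^[n] t ∈ Set.Ico (0 : ℝ) 1 := by
  cases n with
  | zero => exact ht
  | succ n =>
    rw [Function.iterate_succ_apply']
    exact ⟨Int.fract_nonneg _, Int.fract_lt_one _⟩

lemma T_digits {β : ℝ} (hβ : 1 < β) (x : ℕ → ℕ) (t : ℝ) (p : ℕ)
    (h : ∀ i, i ≤ p → 0 ≤ β ^ i * (t - pS β x i) ∧ β ^ i * (t - pS β x i) < 1) :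
    (Tbeta β)^[p] t = β ^ p * (t - pS β x p) := by
  have h0 : 0 < β := by linarith
  induction p with
  | zero => simp [pS]
  | succ p ih =>
    rw [Function.iterate_succ_apply', ih (fun i hi => h i (by omega))]
    unfold Tbeta
    have e : β * (β ^ p * (t - pS β x p)) = β ^ (p + 1) * (t - pS β x (p + 1)) + (x p : ℕ) := by
      rw [pS_succ]; field_simp; ring
    rw [e, Int.fract_add_natCast]
    exact Int.fract_eq_self.2 (h (p + 1) le_rfl)

lemma greedy_cast {β t : ℝ} (hβ : 1 < β) (ht : t ∈ Set.Ico (0 : ℝ) 1) (i : ℕ) :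
    (greedy β t i : ℤ) = ⌊β * (Tbeta β)^[i] t⌋ := by
  unfold greedy
  apply Int.toNat_of_nonneg
  have := (T_mem (β := β) ht i).1
  positivity

lemma greedy_castR {β t : ℝ} (hβ : 1 < β) (ht : t ∈ Set.Ico (0 : ℝ) 1) (i : ℕ) :
    (greedy β t i : ℝ) = (⌊β * (Tbeta β)^[i] t⌋ : ℝ) := by
  rw [← greedy_cast hβ ht]; simp

lemma greedy_le {β t : ℝ} (hβ : 1 < β) (hβ2 : β < 2) (ht : t ∈ Set.Ico (0 : ℝ) 1) (i : ℕ) :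
    greedy β t i ≤ 1 := by
  have h := T_mem (β := β) ht i
  have : ⌊β * (Tbeta β)^[i] t⌋ < 2 := by
    rw [Int.floor_lt]
    push_cast
    nlinarith [h.1, h.2]
  have h2 := greedy_cast hβ ht i
  omega

lemma T_eq {β t : ℝ} (hβ : 1 < β) (ht : t ∈ Set.Ico (0 : ℝ) 1) (n : ℕ) :
    (Tbeta β)^[n] t = β ^ n * (t - pS β (greedy β t) n) := by
  have h0 : 0 < β := by linarith
  induction n with
  | zero => simp [pS]
  | succ n ih =>
    rw [Function.iterate_succ_apply', pS_succ, greedy_castR hβ ht]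
    unfold Tbeta at *
    rw [Int.fract, ih]
    field_simp
    ring

lemma greedy_shift (β t : ℝ) (i j : ℕ) : greedy β ((Tbeta β)^[i] t) j = greedy β t (j + i) := by
  unfold greedy
  rw [← Function.iterate_add_apply]

lemma greedy_mono {β t u : ℝ} (hβ : 1 < β) (ht : t ∈ Set.Ico (0 : ℝ) 1)
    (hu : u ∈ Set.Ico (0 : ℝ) 1) (htu : t ≤ u) (k : ℕ)
    (h : ∀ i, i < k → greedy β t i = greedy β u i) :
    (Tbeta β)^[k] t ≤ (Tbeta β)^[k] u ∧ greedy β t k ≤ greedy β u k := by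
  have h0 : 0 < β := by linarith
  have h1 : (Tbeta β)^[k] t ≤ (Tbeta β)^[k] u := by
    rw [T_eq hβ ht, T_eq hβ hu, pS_congr β _ _ k h]
    gcongr
  refine ⟨h1, ?_⟩
  have : ⌊β * (Tbeta β)^[k] t⌋ ≤ ⌊β * (Tbeta β)^[k] u⌋ := by
    apply Int.floor_le_floor
    gcongr
  rw [← greedy_cast hβ ht, ← greedy_cast hβ hu] at this
  exact_mod_cast this

lemma T_right {β : ℝ} (hβ : 1 < β) (t : ℝ) (n : ℕ) :
    ∃ ε > 0, ∀ y, t ≤ y → y < t + ε → (Tbeta β)^[n] y = (Tbeta β)^[n] t + β ^ n * (y - t) := by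
  have h0 : 0 < β := by linarith
  induction n with
  | zero => exact ⟨1, one_pos, fun y _ _ => by simp⟩
  | succ n ih =>
    obtain ⟨ε, hε, h⟩ := ih
    set u := (Tbeta β)^[n] t with hu
    have hf : 0 < 1 - Int.fract (β * u) := by linarith [Int.fract_lt_one (β * u)]
    refine ⟨min ε ((1 - Int.fract (β * u)) / β ^ (n + 1)), by positivity, ?_⟩
    intro y hy hy'
    have h1 : y < t + ε := lt_of_lt_of_le hy' (by gcongr; exact min_le_left _ _)
    have h2 : y - t < (1 - Int.fract (β * u)) / β ^ (n + 1) := by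
      have := min_le_right ε ((1 - Int.fract (β * u)) / β ^ (n + 1))
      linarith
    rw [lt_div_iff₀ (by positivity)] at h2
    rw [Function.iterate_succ_apply', Function.iterate_succ_apply', h y hy h1, ← hu]
    unfold Tbeta
    rw [Int.fract_eq_iff]
    have h3 : 0 ≤ β ^ (n + 1) * (y - t) := mul_nonneg (by positivity) (by linarith)
    refine ⟨by linarith [Int.fract_nonneg (β * u)], by linarith, ⌊β * u⌋, ?_⟩
    rw [Int.fract]
    ring

lemma Eset_eq {β : ℝ} (hβ : 1 < β) :
    Eset β = {t | t ∈ Set.Ico (0 : ℝ) 1 ∧ ∀ n : ℕ, t ≤ (Tbeta β)^[n] t} := by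
  have h0 : 0 < β := by linarith
  ext t
  constructor
  · rintro ⟨ht, h⟩
    refine ⟨ht, ?_⟩
    by_contra hc
    push Not at hc
    obtain ⟨n, hn⟩ := hc
    obtain ⟨ε, hε, hr⟩ := T_right hβ t n
    set u := (Tbeta β)^[n] t with hu
    have ht1 := ht.2
    set η := min (min ε ((t - u) / β ^ n)) ((1 - t) / 2) with hη
    have hηp : 0 < η := by
      have : 0 < t - u := by linarith
      have : 0 < 1 - t := by linarith
      positivity
    have e1 : η ≤ ε := (min_le_left _ _).trans (min_le_left _ _)
    have e2 : η ≤ (t - u) / β ^ n := (min_le_left _ _).trans (min_le_right _ _)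
    have e3 : η ≤ (1 - t) / 2 := min_le_right _ _
    refine h (t + η) (by linarith) (by linarith) ?_
    ext x
    constructor
    · rintro ⟨hx, hx'⟩
      exact ⟨hx, fun k => by linarith [hx' k]⟩
    · rintro ⟨hx, hx'⟩
      refine ⟨hx, fun k => ?_⟩
      by_contra hk
      push Not at hk
      have h1 := hr _ (hx' k) (by linarith)
      have h2 := hx' (n + k)
      rw [Function.iterate_add_apply, h1] at h2
      have h3 : (Tbeta β)^[k] x - t < (t - u) / β ^ n := by linarith
      rw [lt_div_iff₀ (by positivity)] at h3
      linarith
  · rintro ⟨ht, h⟩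
    refine ⟨ht, fun t' htt' _ he => ?_⟩
    have : t ∈ Kset β t := ⟨ht, h⟩
    rw [← he] at this
    have := this.2 0
    simp at this
    linarith

/-! ### the three parts -/

lemma part1 {β : ℝ} (hβ : 1 < β) (hβ2 : β < 2) (m : ℕ) (hm : 1 / β ^ (m + 1) = 2 - β)
    (t : ℝ) (ht : t ∈ Set.Ico (0 : ℝ) 1) (h : ∀ n : ℕ, t ≤ (Tbeta β)^[n] t) :
    t < 1 - 1 / β := by
  have h0 : 0 < β := by linarith
  by_contra hc
  push Not at hc
  by_cases h1 : t < 1 / β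
  · have hP : ∀ i, pS β (fun j => if j = 0 then 0 else 1) (i + 1)
        = (1 - 1 / β ^ (i + 1)) / (β - 1) - 1 / β := by
      intro i
      rw [← sum_inv hβ, pS, Finset.sum_range_succ', Finset.sum_range_succ']
      simp
    have hP' : ∀ i, i ≤ m → β ^ (i + 1) * pS β (fun j => if j = 0 then 0 else 1) (i + 1)
        = (β ^ (i + 1) - 1) / (β - 1) - β ^ i := by
      intro i _
      rw [hP]
      have : β - 1 ≠ 0 := by linarith
      field_simp
      ring
    have hb1 : 0 < β - 1 := by linarith
    have hc1 : β - 1 ≤ β * t := by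
      have := mul_le_mul_of_nonneg_left hc h0.le
      have e : β * (1 - 1 / β) = β - 1 := by field_simp
      linarith
    have hc2 : β * t < 1 := by
      rw [lt_div_iff₀ h0] at h1; linarith
    have hd : ∀ i, i ≤ m + 1 → 0 ≤ β ^ i * (t - pS β (fun j => if j = 0 then 0 else 1) i) ∧
        β ^ i * (t - pS β (fun j => if j = 0 then 0 else 1) i) < 1 := by
      intro i hi
      cases i with
      | zero => simp [pS]; exact ⟨ht.1, ht.2⟩
      | succ i =>
        have hbi : 0 < β ^ i := by positivity
        have hbm : β ^ (i + 1) * (2 - β) ≤ 1 := by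
          rw [← hm, mul_one_div, div_le_one (by positivity)]
          exact pow_le_pow_right₀ hβ.le hi
        have e : (β ^ (i + 1) - 1) / (β - 1) * (β - 1) = β ^ (i + 1) - 1 := by
          field_simp
        have e' : β ^ (i + 1) = β ^ i * β := pow_succ _ _
        rw [mul_sub, hP' i (by omega)]
        generalize (β ^ (i + 1) - 1) / (β - 1) = Q at *
        rw [e'] at e hbm ⊢
        have hb1i : 1 ≤ β ^ i := one_le_pow₀ hβ.le
        constructor
        · have : Q * (β - 1) ≤ (β ^ i * β * t + β ^ i) * (β - 1) := by
            rw [e]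
            nlinarith [mul_le_mul_of_nonneg_left hc1 (mul_pos hbi hb1).le]
          have := le_of_mul_le_mul_right this hb1
          linarith
        · have a1 : β ^ i * (β * t) < β ^ i * 1 := by gcongr
          have : (2 * β ^ i - 1) * (β - 1) ≤ Q * (β - 1) := by
            rw [e]
            nlinarith [mul_nonneg (sub_nonneg.2 hb1i) (sub_nonneg.2 hβ2.le)]
          have := le_of_mul_le_mul_right this hb1
          linarith
    have hT := T_digits hβ _ t (m + 1) hd
    have hh := h (m + 1)
    rw [hT, mul_sub, hP' m le_rfl] at hh
    have e0 : 1 = β ^ (m + 1) * (2 - β) := by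
      rw [← hm]; field_simp
    have e : (β ^ (m + 1) - 1) / (β - 1) = β ^ (m + 1) := by
      rw [div_eq_iff hb1.ne']; linarith
    rw [e] at hh
    have hB : 1 < β ^ m * β := by rw [← pow_succ]; exact one_lt_pow₀ hβ (by omega)
    rw [pow_succ] at *
    -- t ≤ B t - B + B/β , 1 = B (2-β)
    have : (β ^ m * β - 1) * (1 - β * t) > 0 := mul_pos (by linarith) (by linarith)
    nlinarith
  · push Not at h1
    have hh := h 1
    have ht1 := ht.2
    rw [div_le_iff₀ h0] at h1
    have : (Tbeta β)^[1] t = β * t - 1 := by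
      simp only [Function.iterate_one, Tbeta]
      rw [Int.fract_eq_iff]
      exact ⟨by linarith, by nlinarith, 1, by simp⟩
    rw [this] at hh
    nlinarith

lemma part2 {β : ℝ} (hβ : 1 < β) (m : ℕ) (hm : 1 / β ^ (m + 1) = 2 - β) (hm1 : 1 ≤ m)
    (t : ℝ) (s : List ℕ) (hs : IsBetaLyndon β s)
    (hl : lyndonLeft β s ≤ t) (hr : t < lyndonRight β s) :
    (Tbeta β)^[s.length] t < t := by
  have h0 : 0 < β := by linarith
  obtain ⟨hne, h01, -, hd⟩ := hs
  have hd := hd _ (del_qg hβ m hm hm1)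
  set p := s.length with hp
  have hp0 : 0 < p := List.length_pos_iff.2 hne
  have hbp : 1 < β ^ p := one_lt_pow₀ hβ (by omega)
  have hx : ∀ i, perSeq s i ≤ 1 := by
    intro i
    have hi : i % s.length < s.length := Nat.mod_lt _ hp0
    simp only [perSeq, List.getD_eq_getElem _ _ hi]
    exact h01 _ (List.getElem_mem hi)
  have hL : lyndonLeft β s = pS β (perSeq s) p := by
    apply Finset.sum_congr rfl
    intro i hi
    simp [perSeq, Nat.mod_eq_of_lt (Finset.mem_range.1 hi)]
  have hsh : shiftN p (perSeq s) = perSeq s := by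
    funext i; simp [shiftN, perSeq, hp]
  have hR : lyndonRight β s = sval β (perSeq s) := by
    have h1 := sval_split hβ (perSeq s) hx p
    rw [hsh, ← hL] at h1
    unfold lyndonRight
    rw [← hp]
    have : β ^ p - 1 ≠ 0 := by linarith
    field_simp at h1 ⊢
    linarith
  have hT := T_digits hβ (perSeq s) t p (by
    intro i hi
    constructor
    · have := pS_mono hβ (perSeq s) hi
      exact mul_nonneg (by positivity) (by linarith)
    · have h1 := sval_split hβ (perSeq s) hx i
      have h2 := sval_le_one hβ m hm (perSeq s) hx hd i
      have h3 : t - pS β (perSeq s) i < 1 / β ^ i := by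
        have : sval β (shiftN i (perSeq s)) / β ^ i ≤ 1 / β ^ i := by gcongr
        linarith
      rw [lt_div_iff₀ (by positivity)] at h3
      linarith)
  rw [hT, ← hL]
  unfold lyndonRight at hr
  rw [← hp, div_mul_eq_mul_div, lt_div_iff₀ (by linarith)] at hr
  linarith

lemma part3 {β : ℝ} (hβ : 1 < β) (hβ2 : β < 2) (m : ℕ) (hm : 1 / β ^ (m + 1) = 2 - β)
    (hm1 : 1 ≤ m) (t : ℝ) (ht : t ∈ Set.Ico (0 : ℝ) 1) (htc : t < 1 - 1 / β)
    (h : ∃ n : ℕ, (Tbeta β)^[n] t < t) :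
    ∃ s, IsBetaLyndon β s ∧ lyndonLeft β s ≤ t ∧ t < lyndonRight β s := by
  classical
  have h0 : 0 < β := by linarith
  have hb1 : 0 < β - 1 := by linarith
  obtain ⟨n, hn, hmin⟩ : ∃ n, (Tbeta β)^[n] t < t ∧ ∀ i, i < n → t ≤ (Tbeta β)^[i] t :=
    ⟨Nat.find h, Nat.find_spec h, fun i hi => not_lt.1 (Nat.find_min h hi)⟩
  have hn0 : 0 < n := by
    rcases Nat.eq_zero_or_pos n with rfl | h
    · simp at hn
    · exact h
  set g := greedy β t with hg
  set s := (List.range n).map g with hs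
  have hlen : s.length = n := by simp [hs]
  have hget : ∀ i, i < n → s.getD i 0 = g i := by
    intro i hi
    rw [List.getD_eq_getElem _ _ (by omega)]
    simp [hs]
  have hg1 : ∀ i, g i ≤ 1 := greedy_le hβ hβ2 ht
  have hper : ∀ i, perSeq s i = g (i % n) := by
    intro i
    simp only [perSeq, hlen]
    exact hget _ (Nat.mod_lt _ hn0)
  have hL : lyndonLeft β s = pS β g n := by
    unfold lyndonLeft pS
    rw [hlen]
    apply Finset.sum_congr rfl
    intro i hi
    rw [hget i (Finset.mem_range.1 hi)]
  have hTn := T_eq hβ ht n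
  rw [← hg] at hTn
  have hbn : 1 < β ^ n := one_lt_pow₀ hβ (by omega)
  have hg0 : g 0 = 0 := by
    have h1 := greedy_cast hβ ht 0
    have h2 : ⌊β * (Tbeta β)^[0] t⌋ < 1 := by
      rw [Int.floor_lt]
      have e : β * (1 - 1 / β) = β - 1 := by field_simp
      have := mul_lt_mul_of_pos_left htc h0
      simp
      linarith
    rw [← hg] at h1
    omega
  -- no block of m+1 ones
  have hblock : ∀ r, ¬ ∀ j, j ≤ m → g (r + j) = 1 := by
    intro r hr
    have hu := T_mem (β := β) ht r
    have h1 := T_eq hβ hu (m + 1)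
    have h2 := (T_mem (β := β) hu (m + 1)).1
    have e : pS β (greedy β ((Tbeta β)^[r] t)) (m + 1) = 1 := by
      have : pS β (greedy β ((Tbeta β)^[r] t)) (m + 1) =
          ∑ i ∈ Finset.range (m + 1), 1 / β ^ (i + 1) := by
        apply Finset.sum_congr rfl
        intro i hi
        have := Finset.mem_range.1 hi
        rw [greedy_shift, ← hg, add_comm i r, hr i (by omega)]
        simp
      rw [this, sum_inv hβ, hm, div_eq_one_iff_eq hb1.ne']
      ring
    rw [h1, e] at h2
    have : β ^ (m + 1) * ((Tbeta β)^[r] t - 1) < 0 :=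
      mul_neg_of_pos_of_neg (by positivity) (by linarith [hu.2])
    linarith
  refine ⟨s, ⟨?_, ?_, ?_, ?_⟩, ?_, ?_⟩
  · intro h; rw [h] at hlen; simp at hlen; omega
  · intro a ha
    simp only [hs, List.mem_map] at ha
    obtain ⟨i, -, rfl⟩ := ha
    exact hg1 i
  · intro i hi1 hi2
    rw [hlen] at hi2 ⊢
    have hu := T_mem (β := β) ht i
    have htu := hmin i hi2
    have ht1 : ∀ j, j < n - i → wordSeq (s.take (n - i)) j = g j := by
      intro j hj
      simp only [wordSeq]
      rw [List.getD_eq_getElem _ _ (by simp [hlen]; omega), List.getElem_take]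
      simp [hs]
    have ht2 : ∀ j, j < n - i → wordSeq (s.drop i) j = greedy β ((Tbeta β)^[i] t) j := by
      intro j hj
      simp only [wordSeq]
      rw [List.getD_eq_getElem _ _ (by simp [hlen]; omega), List.getElem_drop, greedy_shift]
      simp [hs, hg, add_comm]
    by_cases hex : ∃ k, k < n - i ∧ g k ≠ greedy β ((Tbeta β)^[i] t) k
    · obtain ⟨hk1, hk2⟩ := Nat.find_spec hex
      have hk3 : ∀ j, j < Nat.find hex → g j = greedy β ((Tbeta β)^[i] t) j := by
        intro j hj
        have := Nat.find_min hex hj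
        by_contra hc
        exact this ⟨by omega, hc⟩
      refine ⟨Nat.find hex, fun j hj => ?_, ?_⟩
      · rw [ht1 j (by omega), ht2 j (by omega), hk3 j hj]
      · rw [ht1 _ hk1, ht2 _ hk1]
        exact lt_of_le_of_ne (greedy_mono hβ ht hu htu _ hk3).2 hk2
    · exfalso
      push Not at hex
      have h1 := (greedy_mono hβ ht hu htu (n - i) hex).1
      rw [← Function.iterate_add_apply, Nat.sub_add_cancel hi2.le] at h1
      have h2 := hmin (n - i) (by omega)
      linarith
  · intro d hd k
    have hle := hd.2.2.2 (del m) (del_qg hβ m hm hm1).1 (del_qg hβ m hm hm1).2.1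
      (del_qg hβ m hm hm1).2.2.1
    suffices hlt : seqLt (shiftN k (perSeq s)) (del m) by
      rcases hle with h | h
      · rw [← h]; exact hlt
      · exact seqLt_trans hlt h
    rcases seq_tri (shiftN k (perSeq s)) (del m) with h | h | h
    · exfalso
      have hval : ∀ j, g (j % n) = del m ((n - 1) * k + j) := by
        intro j
        rw [← h]
        simp only [shiftN, hper]
        congr 1
        have : (n - 1) * k + j + k = j + n * k := by
          obtain ⟨n', rfl⟩ : ∃ n', n = n' + 1 := ⟨n - 1, by omega⟩
          simp; ring
        rw [this, Nat.add_mul_mod_self_left]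
      have hv0 := hval 0
      rw [Nat.zero_mod, hg0] at hv0
      have hmod := del_zero hv0.symm
      rw [Nat.add_zero] at hmod
      have hone : ∀ j, 1 ≤ j → j ≤ m → g (j % n) = 1 := by
        intro j hj1 hj2
        rw [hval]
        unfold del
        rw [if_neg]
        rw [Nat.add_mod, hmod, Nat.mod_eq_of_lt (show j < m + 1 by omega)]
        rw [Nat.mod_eq_sub_mod (by omega), Nat.mod_eq_of_lt (by omega)]
        omega
      by_cases hnm : n ≤ m
      · have := hone n hn0 hnm
        rw [Nat.mod_self, hg0] at this
        omega
      · push Not at hnm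
        have e : pS β g (m + 1) = 1 - 1 / β := by
          have e1 : ∑ i ∈ Finset.range (m + 1), 1 / β ^ (i + 1) = 1 := by
            rw [sum_inv hβ, hm, div_eq_one_iff_eq hb1.ne']
            ring
          rw [Finset.sum_range_succ'] at e1
          unfold pS
          rw [Finset.sum_range_succ', hg0]
          have e2 : ∑ i ∈ Finset.range m, (g (i + 1) : ℝ) / β ^ (i + 1 + 1)
              = ∑ i ∈ Finset.range m, 1 / β ^ (i + 1 + 1) := by
            apply Finset.sum_congr rfl
            intro i hi
            have := Finset.mem_range.1 hi
            have h1 := hone (i + 1) (by omega) (by omega)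
            rw [Nat.mod_eq_of_lt (by omega)] at h1
            rw [h1]; simp
          rw [e2]
          simp at e1 ⊢
          linarith
        have h1 := T_eq hβ ht (m + 1)
        have h2 := (T_mem (β := β) ht (m + 1)).1
        rw [h1, ← hg, e] at h2
        have : β ^ (m + 1) * (t - (1 - 1 / β)) < 0 :=
          mul_neg_of_pos_of_neg (by positivity) (by linarith)
        linarith
    · exact h
    · exfalso
      obtain ⟨q, hq, hq'⟩ := h
      have hy1 : shiftN k (perSeq s) q ≤ 1 := by
        simp only [shiftN, hper]; exact hg1 _
      have hmod := del_zero (show del m q = 0 by omega)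
      have hqm : m ≤ q := by rw [← hmod]; exact Nat.mod_le _ _
      have hones : ∀ j, j ≤ m → g ((q - m + k + j) % n) = 1 := by
        intro j hj
        have e : g ((q - m + k + j) % n) = shiftN k (perSeq s) (q - m + j) := by
          simp only [shiftN, hper]; congr 2; ring
        rw [e]
        rcases Nat.eq_or_lt_of_le hj with rfl | hj
        · rw [Nat.sub_add_cancel hqm]; omega
        · rw [← hq _ (by omega)]
          unfold del
          rw [if_neg]
          have e1 : (q - m) % (m + 1) = 0 := by
            have := Nat.div_add_mod q (m + 1)
            rw [hmod] at this
            have e2 : q - m = (m + 1) * (q / (m + 1)) := by omega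
            rw [e2]; simp
          rw [Nat.add_mod, e1, Nat.mod_eq_of_lt (show j < m + 1 by omega), zero_add,
            Nat.mod_eq_of_lt (by omega)]
          omega
      set a := q - m + k with ha
      have hshift : ∀ j, j ≤ m → (a + j) % n = a % n + j := by
        intro j
        induction j with
        | zero => intro _; simp
        | succ j ih =>
          intro hj
          have h1 := ih (by omega)
          have h2 := hones (j + 1) hj
          have h3 : (a + (j + 1)) % n ≠ 0 := by
            intro hc
            rw [hc, hg0] at h2
            omega
          have h4 : (a + j) % n < n := Nat.mod_lt _ hn0
          rw [← add_assoc, Nat.add_mod_eq_ite] at h3 ⊢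
          by_cases hn1 : n = 1
          · subst hn1; simp [Nat.mod_one] at h3
          rw [Nat.mod_eq_of_lt (show 1 < n by omega)] at h3 ⊢
          split_ifs at h3 ⊢ <;> omega
      apply hblock (a % n)
      intro j hj
      rw [← hshift j hj]
      exact hones j hj
  · rw [hL]
    have h2 := (T_mem (β := β) ht n).1
    rw [hTn] at h2
    have := nonneg_of_mul_nonneg_right h2 (by positivity)
    linarith
  · unfold lyndonRight
    rw [hL, hlen, div_mul_eq_mul_div, lt_div_iff₀ (by linarith)]
    rw [hTn] at hn
    linarith

/-- For a multinacci `β ∈ (1,2)`,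
`E_β = [0, 1 - 1/β) \ ⋃ [t_L, t_R)`, the union over all β-Lyndon intervals. -/
theorem stmt_1 (β : ℝ) (hβ : β ∈ Set.Ioo (1 : ℝ) 2) (hmulti : IsMultinacci β) :
    Eset β = Set.Ico (0 : ℝ) (1 - 1 / β) \ lyndonUnionIco β := by
  obtain ⟨hβ1, hβ2⟩ := hβ
  obtain ⟨m, hm1, hm0⟩ := hmulti
  have hm := mult_eq hβ1 m hm0
  have h0 : 0 < β := by linarith
  rw [Eset_eq hβ1]
  ext t
  constructor
  · rintro ⟨ht, h⟩
    refine ⟨⟨ht.1, part1 hβ1 hβ2 m hm t ht h⟩, ?_⟩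
    intro hU
    simp only [lyndonUnionIco, Set.mem_iUnion] at hU
    obtain ⟨s, hs, hl, hr⟩ := hU
    have := part2 hβ1 m hm hm1 t s hs hl hr
    linarith [h s.length]
  · rintro ⟨⟨ht0, ht1⟩, hU⟩
    have hpos : 0 < 1 / β := by positivity
    have ht : t ∈ Set.Ico (0 : ℝ) 1 := ⟨ht0, by linarith⟩
    refine ⟨ht, ?_⟩
    by_contra hc
    push Not at hc
    obtain ⟨s, hs, hl, hr⟩ := part3 hβ1 hβ2 m hm hm1 t ht ht1 hc
    apply hU
    simp only [lyndonUnionIco, Set.mem_iUnion]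
    exact ⟨s, hs, hl, hr⟩
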